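/- Let n ≥ 3 be odd. The configuration of 2n+1 points obtained from a regular n-gon by replacing each vertex by a pair of infinitesimally-close points (so the convex hull has 2n vertices) and adding the barycenter C is monochromatic under the Orchard relation. In particular, for each i, n(P_i,P'_i) = 0, n(P'_i,P_{i+1}) = 2, and n(C,P_i) is even. -/

import Mathlib

open scoped Classical

noncomputable section

/-- Orientation determinant of two vectors in the plane. -/
def det2 (u v : ℝ × ℝ) : ℝ := u.1 * v.2 - u.2 * v.1

/-- The line through `A` and `B` separates the points `P` and `Q`
(they lie in distinct open half-planes determined by the line). -/
def SepLine (A B P Q : ℝ × ℝ) : Prop :=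
  det2 (B - A) (P - A) * det2 (B - A) (Q - A) < 0

/-- A finite planar point set is a generic configuration if no three of its
points are collinear. -/
def Generic (C : Finset (ℝ × ℝ)) : Prop :=
  ∀ a ∈ C, ∀ b ∈ C, ∀ c ∈ C, a ≠ b → a ≠ c → b ≠ c →
    ¬ Collinear ℝ ({a, b, c} : Set (ℝ × ℝ))

/-- `nsep C P Q` is the number of lines spanned by (unordered) pairs of points of
`C \ {P,Q}` that separate `P` from `Q`. -/
def nsep (C : Finset (ℝ × ℝ)) (P Q : ℝ × ℝ) : ℕ :=
  (((C \ {P, Q}).powersetCard 2).filter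
    (fun s => ∃ A ∈ s, ∃ B ∈ s, A ≠ B ∧ SepLine A B P Q)).card

/-- The Orchard relation: `P ∼ Q` iff `n(P,Q) ≡ n - 3 (mod 2)` where `n = |C|`. -/
def Orchard (C : Finset (ℝ × ℝ)) (P Q : ℝ × ℝ) : Prop :=
  (nsep C P Q : ℤ) ≡ (C.card : ℤ) - 3 [ZMOD 2]

/-- A configuration is monochromatic if all its points are Orchard-equivalent. -/
def Mono (C : Finset (ℝ × ℝ)) : Prop :=
  ∀ P ∈ C, ∀ Q ∈ C, P ≠ Q → Orchard C P Q

/-- A configuration is in convex position if each of its points is a vertex of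
the convex hull. -/
def ConvexPos (C : Finset (ℝ × ℝ)) : Prop :=
  ∀ P ∈ C, P ∉ convexHull ℝ ((C : Set (ℝ × ℝ)) \ {P})

/-- The `k`-th vertex of the regular `n`-gon inscribed in the unit circle
centered at the origin. -/
def vtx (n : ℕ) (k : Fin n) : ℝ × ℝ :=
  (Real.cos (2 * Real.pi * k / n), Real.sin (2 * Real.pi * k / n))

/-- The configuration consisting of the vertices of the regular `n`-gon together
with its barycenter (the origin). -/
def ngonWithCenter (n : ℕ) : Finset (ℝ × ℝ) :=
  insert ((0, 0) : ℝ × ℝ) (Finset.image (vtx n) Finset.univ)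

/-!
Let `P`, `Q`, `R` be points of a generic set. A line through two further points separates none or
two of the three pairs, and for a further point `A` an odd number of the lines `PA`, `QA`, `RA`
separates the two remaining points. Hence `n(P,Q) + n(Q,R) + n(R,P) ≡ m - 3` modulo 2 for a set of
`m` points, so the Orchard relation is transitive, and it is enough to compare every outer point
with the center `C`, which is the origin.

No line through two other points separates a pair of twins, so replacing points by their twins is
an involution on the lines separating `C` from an outer point. It fixes none of them, as the line
through two twins does not separate `C` from a third point; therefore `n(C,P)` is even.

As `C` lies inside the convex `2n`-gon, the orientation of three outer points is determined by their
angular order around `C`. In particular a line separating two consecutive outer points passes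
through `C` and through a point of the opposite angle: there is none for twins, and there are two,
which are twins, for `P'_i` and `P_{i+1}`, since `n` is odd.
-/

section Orientation

/-- Twice the signed area of the triangle `abc`: positive when `a`, `b`, `c` are in
counterclockwise order. By definition `SepLine A B P Q` is
`orient A B P * orient A B Q < 0`. -/
def orient (a b c : ℝ × ℝ) : ℝ := det2 (b - a) (c - a)

lemma orient_eq_det2_add (a b c : ℝ × ℝ) :
    orient a b c = det2 a b + det2 b c + det2 c a := by
  simp only [orient, det2, Prod.fst_sub, Prod.snd_sub]; ring

lemma orient_rotate (a b c : ℝ × ℝ) : orient b c a = orient a b c := by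
  simp only [orient_eq_det2_add]; ring

lemma det2_swap (u v : ℝ × ℝ) : det2 v u = -det2 u v := by
  simp only [det2]; ring

lemma det2_self (u : ℝ × ℝ) : det2 u u = 0 := by
  rw [det2, mul_comm, sub_self]

lemma orient_swap (a b c : ℝ × ℝ) : orient b a c = -orient a b c := by
  simp only [orient_eq_det2_add, det2]; ring

lemma orient_swap_right (a b c : ℝ × ℝ) : orient a c b = -orient a b c := by
  rw [← orient_rotate, orient_swap, orient_rotate, orient_rotate]

lemma orient_zero_right (a b : ℝ × ℝ) : orient a b 0 = det2 a b := by
  simp [orient_eq_det2_add, det2]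

lemma orient_zero_left (a b : ℝ × ℝ) : orient 0 a b = det2 a b := by
  rw [← orient_rotate, orient_zero_right]

lemma exists_smul_of_det2_eq_zero {u w : ℝ × ℝ} (hu : u ≠ 0) (h : det2 u w = 0) :
    ∃ r : ℝ, w = r • u := by
  have hnorm : u.1 ^ 2 + u.2 ^ 2 ≠ 0 := fun h0 =>
    hu (Prod.ext (by simp; nlinarith) (by simp; nlinarith))
  simp only [det2] at h
  refine ⟨(u.1 * w.1 + u.2 * w.2) / (u.1 ^ 2 + u.2 ^ 2), Prod.ext ?_ ?_⟩
  · simp only [Prod.smul_fst, smul_eq_mul]; field_simp; linear_combination -u.2 * h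
  · simp only [Prod.smul_snd, smul_eq_mul]; field_simp; linear_combination u.1 * h

lemma collinear_triple_iff_orient_eq_zero {a b c : ℝ × ℝ} :
    Collinear ℝ {a, b, c} ↔ orient a b c = 0 := by
  rw [collinear_iff_of_mem (p₀ := a) (by simp)]
  constructor
  · rintro ⟨v, hv⟩
    obtain ⟨r, rfl⟩ := hv b (by simp)
    obtain ⟨s, rfl⟩ := hv c (by simp)
    simp [orient, det2]; ring
  · intro h
    by_cases hab : b - a = 0
    · refine ⟨c - a, ?_⟩
      rintro p (rfl | rfl | rfl)
      exacts [⟨0, by simp⟩, ⟨0, by simpa using sub_eq_zero.mp hab⟩, ⟨1, by simp⟩]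
    · obtain ⟨r, hr⟩ := exists_smul_of_det2_eq_zero hab h
      refine ⟨b - a, ?_⟩
      rintro p (rfl | rfl | rfl)
      exacts [⟨0, by simp⟩, ⟨1, by simp⟩, ⟨r, by rw [← hr]; simp⟩]

lemma Generic.orient_ne_zero {C : Finset (ℝ × ℝ)} (hC : Generic C) {a b c : ℝ × ℝ}
    (ha : a ∈ C) (hb : b ∈ C) (hc : c ∈ C) (hab : a ≠ b) (hac : a ≠ c) (hbc : b ≠ c) :
    orient a b c ≠ 0 :=
  mt collinear_triple_iff_orient_eq_zero.mpr (hC a ha b hb c hc hab hac hbc)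

lemma mem_of_orient_nonneg {K : Set (ℝ × ℝ)} (hK : Convex ℝ K) {a b c p : ℝ × ℝ}
    (ha : a ∈ K) (hb : b ∈ K) (hc : c ∈ K) (habc : 0 < orient a b c)
    (hpbc : 0 ≤ orient p b c) (hapc : 0 ≤ orient a p c) (habp : 0 ≤ orient a b p) : p ∈ K := by
  have hsum : orient p b c + orient a p c + orient a b p = orient a b c := by
    simp only [orient_eq_det2_add, det2]; ring
  -- The barycentric coordinates of `p` in the triangle `abc` are ratios of signed areas.
  have hp : ∑ i, ![orient p b c / orient a b c, orient a p c / orient a b c,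
      orient a b p / orient a b c] i • ![a, b, c] i = p := by
    have h := habc.ne'
    simp only [Fin.sum_univ_three, Matrix.cons_val]
    ext <;>
      simp only [Prod.fst_add, Prod.snd_add, Prod.smul_fst, Prod.smul_snd, smul_eq_mul] <;>
      field_simp <;> simp only [orient_eq_det2_add, det2] <;> ring
  rw [← hp]
  refine hK.sum_mem ?_ ?_ ?_
  · simp [Fin.forall_fin_succ, div_nonneg, habc.le, hpbc, hapc, habp]
  · simp only [Fin.sum_univ_three, Matrix.cons_val]
    field_simp
    exact hsum
  · simp [Fin.forall_fin_succ, ha, hb, hc]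

end Orientation

section Counting

variable {C T : Finset (ℝ × ℝ)} {A B P Q X : ℝ × ℝ}

lemma sepLine_swap_line : SepLine A B P Q ↔ SepLine B A P Q := by
  change orient A B P * orient A B Q < 0 ↔ orient B A P * orient B A Q < 0
  rw [orient_swap A B P, orient_swap A B Q, neg_mul_neg]

lemma sepLine_comm : SepLine A B P Q ↔ SepLine A B Q P := by
  rw [SepLine, mul_comm, SepLine]

lemma nsep_comm (C : Finset (ℝ × ℝ)) (P Q : ℝ × ℝ) : nsep C P Q = nsep C Q P := by
  simp only [nsep, Finset.pair_comm P Q, sepLine_comm (P := P) (Q := Q)]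

/-- The pairs of points of `T` whose line separates `P` from `Q`, so that `nsep C P Q` is by
definition the cardinality of `sepPairs (C \ {P, Q}) P Q`. -/
def sepPairs (T : Finset (ℝ × ℝ)) (P Q : ℝ × ℝ) : Finset (Finset (ℝ × ℝ)) :=
  (T.powersetCard 2).filter (fun s => ∃ A ∈ s, ∃ B ∈ s, A ≠ B ∧ SepLine A B P Q)

lemma exists_sepLine_pair_iff (hAB : A ≠ B) :
    (∃ X ∈ ({A, B} : Finset (ℝ × ℝ)), ∃ Y ∈ ({A, B} : Finset (ℝ × ℝ)),
      X ≠ Y ∧ SepLine X Y P Q) ↔ SepLine A B P Q := by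
  simp [hAB, hAB.symm, sepLine_swap_line (A := B)]

lemma mem_sepPairs {s : Finset (ℝ × ℝ)} : s ∈ sepPairs T P Q ↔
    ∃ A ∈ T, ∃ B ∈ T, A ≠ B ∧ SepLine A B P Q ∧ s = {A, B} := by
  rw [sepPairs, Finset.mem_filter, Finset.mem_powersetCard]
  constructor
  · rintro ⟨⟨hsT, hs⟩, hsep⟩
    obtain ⟨A, B, hAB, rfl⟩ := Finset.card_eq_two.mp hs
    exact ⟨A, hsT (by simp), B, hsT (by simp), hAB, (exists_sepLine_pair_iff hAB).mp hsep, rfl⟩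
  · rintro ⟨A, hA, B, hB, hAB, hsep, rfl⟩
    exact ⟨⟨by simp [Finset.insert_subset_iff, hA, hB], Finset.card_pair hAB⟩,
      (exists_sepLine_pair_iff hAB).mpr hsep⟩

lemma card_sepPairs_eq_zero_iff : (sepPairs T P Q).card = 0 ↔
    ∀ A ∈ T, ∀ B ∈ T, A ≠ B → ¬ SepLine A B P Q := by
  rw [Finset.card_eq_zero, Finset.eq_empty_iff_forall_notMem]
  constructor
  · exact fun h A hA B hB hAB hsep => h _ (mem_sepPairs.mpr ⟨A, hA, B, hB, hAB, hsep, rfl⟩)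
  · intro h s hs
    obtain ⟨A, hA, B, hB, hAB, hsep, -⟩ := mem_sepPairs.mp hs
    exact h A hA B hB hAB hsep

lemma card_sepPairs_insert (hX : X ∉ T) : (sepPairs (insert X T) P Q).card =
    (sepPairs T P Q).card + (T.filter (fun A => SepLine X A P Q)).card := by
  have hsplit : sepPairs (insert X T) P Q =
      sepPairs T P Q ∪ (T.filter (fun A => SepLine X A P Q)).image (fun A => {X, A}) := by
    ext s
    simp only [Finset.mem_union, Finset.mem_image, Finset.mem_filter, mem_sepPairs]
    constructor
    · rintro ⟨A, hA, B, hB, hAB, hsep, rfl⟩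
      rcases Finset.mem_insert.mp hA with hAX | hA <;>
        rcases Finset.mem_insert.mp hB with hBX | hB
      · exact absurd (hAX.trans hBX.symm) hAB
      · exact .inr ⟨B, ⟨hB, hAX ▸ hsep⟩, by rw [hAX]⟩
      · exact .inr ⟨A, ⟨hA, hBX ▸ sepLine_swap_line.mp hsep⟩, by rw [hBX, Finset.pair_comm]⟩
      · exact .inl ⟨A, hA, B, hB, hAB, hsep, rfl⟩
    · rintro (⟨A, hA, B, hB, h⟩ | ⟨A, ⟨hA, hsep⟩, rfl⟩)
      · exact ⟨A, Finset.mem_insert_of_mem hA, B, Finset.mem_insert_of_mem hB, h⟩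
      · exact ⟨X, Finset.mem_insert_self X T, A, Finset.mem_insert_of_mem hA,
          fun h => hX (h ▸ hA), hsep, rfl⟩
  have hdisj : Disjoint (sepPairs T P Q)
      ((T.filter (fun A => SepLine X A P Q)).image (fun A => {X, A})) := by
    rw [Finset.disjoint_left]
    intro s hs hs'
    obtain ⟨A, -, rfl⟩ := Finset.mem_image.mp hs'
    have hsub := (Finset.mem_powersetCard.mp (Finset.mem_filter.mp hs).1).1
    exact hX (hsub (by simp))
  have hinj : Set.InjOn (fun A => ({X, A} : Finset (ℝ × ℝ)))
      (T.filter (fun A => SepLine X A P Q)) := by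
    intro A hA B _ hAB
    have hAX : A ≠ X := fun h => hX (h ▸ (Finset.mem_filter.mp hA).1)
    have hmem : A ∈ ({X, B} : Finset (ℝ × ℝ)) := (Finset.ext_iff.mp hAB A).mp (by simp)
    simpa [hAX] using hmem
  rw [hsplit, Finset.card_union_of_disjoint hdisj, Finset.card_image_of_injOn hinj]

lemma nsep_eq_card_sepPairs_add (hX : X ∈ C) (hXP : X ≠ P) (hXQ : X ≠ Q) :
    nsep C P Q = (sepPairs (C \ {X, P, Q}) P Q).card +
      ((C \ {X, P, Q}).filter (fun A => SepLine X A P Q)).card := by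
  have hC : C \ {P, Q} = insert X (C \ {X, P, Q}) := by
    rw [Finset.sdiff_insert C {P, Q} X, Finset.insert_erase (by simp [hX, hXP, hXQ])]
  rw [← card_sepPairs_insert (by simp), ← hC]
  rfl

end Counting

section OrchardRelation

variable {C : Finset (ℝ × ℝ)} {A O P Q R : ℝ × ℝ}

lemma even_count_mul_neg {x y z : ℝ} (hx : x ≠ 0) (hy : y ≠ 0) (hz : z ≠ 0) :
    Even ((if x * y < 0 then 1 else 0) + (if y * z < 0 then 1 else 0)
      + if z * x < 0 then 1 else 0) := by
  rcases hx.lt_or_gt with hx | hx <;> rcases hy.lt_or_gt with hy | hy <;>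
    rcases hz.lt_or_gt with hz | hz <;>
    simp [mul_neg_iff, hx, hy, hz, hx.not_gt, hy.not_gt, hz.not_gt]

lemma odd_count_mul_pos {x y z : ℝ} (hx : x ≠ 0) (hy : y ≠ 0) (hz : z ≠ 0) :
    Odd ((if 0 < x * y then 1 else 0) + (if 0 < y * z then 1 else 0)
      + if 0 < z * x then 1 else 0) := by
  rcases hx.lt_or_gt with hx | hx <;> rcases hy.lt_or_gt with hy | hy <;>
    rcases hz.lt_or_gt with hz | hz <;>
    simp +decide [mul_pos_iff, hx, hy, hz, hx.not_gt, hy.not_gt, hz.not_gt]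

lemma sepLine_iff_mul_pos : SepLine R A P Q ↔ 0 < orient Q R A * orient R P A := by
  change orient R A P * orient R A Q < 0 ↔ _
  rw [orient_swap_right, orient_rotate Q, neg_mul, neg_lt_zero, mul_comm]

lemma even_sum_card_sepPairs {T : Finset (ℝ × ℝ)}
    (h : ∀ A ∈ T, ∀ B ∈ T, A ≠ B → orient A B P ≠ 0 ∧ orient A B Q ≠ 0 ∧ orient A B R ≠ 0) :
    Even ((sepPairs T P Q).card + (sepPairs T Q R).card + (sepPairs T R P).card) := by
  simp only [sepPairs, Finset.card_filter, ← Finset.sum_add_distrib]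
  refine Finset.even_sum _ fun s hs => ?_
  obtain ⟨hsT, hs⟩ := Finset.mem_powersetCard.mp hs
  obtain ⟨A, B, hAB, rfl⟩ := Finset.card_eq_two.mp hs
  obtain ⟨hP, hQ, hR⟩ := h A (hsT (by simp)) B (hsT (by simp)) hAB
  simp only [exists_sepLine_pair_iff hAB]
  exact even_count_mul_neg hP hQ hR

lemma even_sum_card_filter_sepLine {T : Finset (ℝ × ℝ)}
    (h : ∀ A ∈ T, orient P Q A ≠ 0 ∧ orient Q R A ≠ 0 ∧ orient R P A ≠ 0) :
    Even ((T.filter (fun A => SepLine R A P Q)).card + (T.filter (fun A => SepLine P A Q R)).card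
      + (T.filter (fun A => SepLine Q A R P)).card + T.card) := by
  rw [Finset.card_eq_sum_ones T]
  simp only [Finset.card_filter, ← Finset.sum_add_distrib, sepLine_iff_mul_pos]
  refine Finset.even_sum _ fun A hA => ?_
  obtain ⟨hPQ, hQR, hRP⟩ := h A hA
  exact (odd_count_mul_pos hQR hRP hPQ).add_one

theorem Generic.orchard_triple (hC : Generic C) (hP : P ∈ C) (hQ : Q ∈ C) (hR : R ∈ C)
    (hPQ : P ≠ Q) (hQR : Q ≠ R) (hRP : R ≠ P) :
    (nsep C P Q + nsep C Q R + nsep C R P : ℤ) ≡ C.card - 3 [ZMOD 2] := by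
  have hcard : (C \ {R, P, Q}).card + 3 = C.card := by
    rw [← Finset.card_sdiff_add_card_eq_card (s := {R, P, Q}) (t := C)
      (by simp [Finset.insert_subset_iff, hP, hQ, hR]),
      Finset.card_eq_three.mpr ⟨R, P, Q, hRP, hQR.symm, hPQ, rfl⟩]
  have hT : ∀ A ∈ C \ {R, P, Q}, A ∈ C ∧ A ≠ R ∧ A ≠ P ∧ A ≠ Q := by simp
  have hpairs : Even _ := even_sum_card_sepPairs (P := P) (Q := Q) (R := R)
    (T := C \ {R, P, Q}) fun A hA B hB hAB =>
      ⟨hC.orient_ne_zero (hT A hA).1 (hT B hB).1 hP hAB (hT A hA).2.2.1 (hT B hB).2.2.1,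
        hC.orient_ne_zero (hT A hA).1 (hT B hB).1 hQ hAB (hT A hA).2.2.2 (hT B hB).2.2.2,
        hC.orient_ne_zero (hT A hA).1 (hT B hB).1 hR hAB (hT A hA).2.1 (hT B hB).2.1⟩
  have hpoints : Even _ := even_sum_card_filter_sepLine (P := P) (Q := Q) (R := R)
    (T := C \ {R, P, Q}) fun A hA =>
      ⟨hC.orient_ne_zero hP hQ (hT A hA).1 hPQ (hT A hA).2.2.1.symm (hT A hA).2.2.2.symm,
        hC.orient_ne_zero hQ hR (hT A hA).1 hQR (hT A hA).2.2.2.symm (hT A hA).2.1.symm,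
        hC.orient_ne_zero hR hP (hT A hA).1 hRP (hT A hA).2.1.symm (hT A hA).2.2.1.symm⟩
  have hPQR : ({P, Q, R} : Finset (ℝ × ℝ)) = {R, P, Q} := by grind
  have hQRP : ({Q, R, P} : Finset (ℝ × ℝ)) = {R, P, Q} := by grind
  rw [nsep_eq_card_sepPairs_add hR hRP hQR.symm, nsep_eq_card_sepPairs_add hP hPQ hRP.symm,
    nsep_eq_card_sepPairs_add hQ hQR hPQ.symm, hPQR, hQRP]
  rw [Nat.even_iff] at hpairs hpoints
  rw [Int.ModEq]
  omega

lemma orchard_comm : Orchard C P Q ↔ Orchard C Q P := by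
  rw [Orchard, nsep_comm, Orchard]

lemma Generic.orchard_trans (hC : Generic C) (hP : P ∈ C) (hQ : Q ∈ C) (hR : R ∈ C)
    (hPQ : P ≠ Q) (hQR : Q ≠ R) (hRP : R ≠ P) (h : Orchard C P Q) (h' : Orchard C Q R) :
    Orchard C P R := by
  have htriple := hC.orchard_triple hP hQ hR hPQ hQR hRP
  simp only [Orchard, Int.ModEq, nsep_comm C P R] at h h' htriple ⊢
  omega

lemma Generic.mono_of_forall_orchard (hC : Generic C) (hO : O ∈ C)
    (h : ∀ P ∈ C, P ≠ O → Orchard C O P) : Mono C := by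
  intro P hP Q hQ hPQ
  by_cases hPO : P = O
  · exact hPO ▸ h Q hQ (hPO ▸ hPQ.symm)
  by_cases hQO : Q = O
  · exact orchard_comm.mp (hQO ▸ h P hP hPO)
  · exact hC.orchard_trans hP hO hQ hPO (Ne.symm hQO) hPQ.symm (orchard_comm.mp (h P hP hPO))
      (h Q hQ hQO)

lemma orchard_iff_even_of_odd_card (hC : Odd C.card) :
    Orchard C P Q ↔ Even (nsep C P Q) := by
  rw [Nat.odd_iff] at hC
  rw [Nat.even_iff, Orchard, Int.ModEq]
  omega

end OrchardRelation

section Twins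

variable {S : Finset (ℝ × ℝ)} {A A' B O P : ℝ × ℝ} {τ : ℝ × ℝ → ℝ × ℝ}

lemma even_card_of_involution {α : Type*} {s : Finset α} (g : α → α)
    (hmem : ∀ a ∈ s, g a ∈ s) (hinv : ∀ a ∈ s, g (g a) = a) (hne : ∀ a ∈ s, g a ≠ a) :
    Even s.card := by
  have h : ∑ _a ∈ s, (1 : ZMod 2) = 0 :=
    Finset.sum_involution (fun a _ => g a) (fun _ _ => CharTwo.add_self_eq_zero 1)
      (fun a ha _ => hne a ha) hmem hinv
  rwa [Finset.sum_const, nsmul_one, ZMod.natCast_eq_zero_iff_even] at h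

lemma SepLine.replace_left (h : SepLine A B O P) (hO : ¬ SepLine B O A A')
    (hP : ¬ SepLine B P A A') (hO' : orient A' B O ≠ 0) (hP' : orient A' B P ≠ 0) :
    SepLine A' B O P := by
  change orient A B O * orient A B P < 0 at h
  change ¬ orient B O A * orient B O A' < 0 at hO
  change ¬ orient B P A * orient B P A' < 0 at hP
  change orient A' B O * orient A' B P < 0
  rw [orient_rotate A B O, orient_rotate A' B O, not_lt] at hO
  rw [orient_rotate A B P, orient_rotate A' B P, not_lt] at hP
  by_contra hsame
  have hpos := (not_lt.mp hsame).lt_of_ne' (mul_ne_zero hO' hP')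
  linarith [mul_nonneg hO hP, mul_neg_of_neg_of_pos h hpos,
    mul_mul_mul_comm (orient A B O) (orient A' B O) (orient A B P) (orient A' B P)]

/-- The pairing `τ` of `S` by twins: points that no line through two other points of `insert O S`
separates, and whose own line does not pass between `O` and a third point of `S`. -/
structure IsTwinPairing (S : Finset (ℝ × ℝ)) (O : ℝ × ℝ) (τ : ℝ × ℝ → ℝ × ℝ) : Prop where
  mem : ∀ A ∈ S, τ A ∈ S
  involutive : ∀ A ∈ S, τ (τ A) = A
  ne : ∀ A ∈ S, τ A ≠ A
  nsep_eq_zero : ∀ A ∈ S, nsep (insert O S) A (τ A) = 0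
  not_sepLine : ∀ A ∈ S, ∀ P ∈ S, P ≠ A → P ≠ τ A → ¬ SepLine A (τ A) O P

/-- Exchanges every point of `S` outside `{P, τ P}` with its twin and fixes `τ P`. -/
def swapTwinsAwayFrom (τ : ℝ × ℝ → ℝ × ℝ) (P A : ℝ × ℝ) : ℝ × ℝ :=
  if A = τ P then A else τ A

namespace IsTwinPairing

lemma not_sepLine_of_mem (hτ : IsTwinPairing S O τ) (hA : A ∈ S) {X Y : ℝ × ℝ}
    (hX : X ∈ insert O S) (hY : Y ∈ insert O S) (hXY : X ≠ Y) (hXA : X ≠ A) (hXA' : X ≠ τ A)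
    (hYA : Y ≠ A) (hYA' : Y ≠ τ A) : ¬ SepLine X Y A (τ A) :=
  card_sepPairs_eq_zero_iff.mp (hτ.nsep_eq_zero A hA) X
    (Finset.mem_sdiff.mpr ⟨hX, by simp [hXA, hXA']⟩) Y
    (Finset.mem_sdiff.mpr ⟨hY, by simp [hYA, hYA']⟩) hXY

lemma swap_mem_erase (hτ : IsTwinPairing S O τ) (hA : A ∈ S.erase P) :
    swapTwinsAwayFrom τ P A ∈ S.erase P := by
  obtain ⟨hAP, hA⟩ := Finset.mem_erase.mp hA
  unfold swapTwinsAwayFrom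
  split_ifs with h
  · exact Finset.mem_erase.mpr ⟨hAP, hA⟩
  · exact Finset.mem_erase.mpr ⟨fun h' => h (h' ▸ (hτ.involutive A hA).symm), hτ.mem A hA⟩

lemma swap_swap (hτ : IsTwinPairing S O τ) (hP : P ∈ S) (hA : A ∈ S.erase P) :
    swapTwinsAwayFrom τ P (swapTwinsAwayFrom τ P A) = A := by
  obtain ⟨hAP, hA⟩ := Finset.mem_erase.mp hA
  have hinj : τ A ≠ τ P := fun h =>
    hAP (by rw [← hτ.involutive A hA, h, hτ.involutive P hP])
  by_cases h : A = τ P <;> simp [swapTwinsAwayFrom, h, hinj, hτ.involutive, hA]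

lemma sepLine_swap (hτ : IsTwinPairing S O τ) (hC : Generic (insert O S)) (hO : O ∉ S)
    (hP : P ∈ S) (hA : A ∈ S.erase P) (hB : B ∈ S.erase P) (hAB : A ≠ B)
    (h : SepLine A B O P) :
    swapTwinsAwayFrom τ P A ≠ B ∧ SepLine (swapTwinsAwayFrom τ P A) B O P := by
  have hσA := hτ.swap_mem_erase hA
  unfold swapTwinsAwayFrom at hσA ⊢
  split_ifs at hσA ⊢ with hAP'
  · exact ⟨hAB, h⟩
  obtain ⟨hAP, hAS⟩ := Finset.mem_erase.mp hA
  obtain ⟨hBP, hBS⟩ := Finset.mem_erase.mp hB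
  obtain ⟨hA'P, hA'S⟩ := Finset.mem_erase.mp hσA
  have hA'B : τ A ≠ B := fun hB' => hτ.not_sepLine A hAS P hP hAP.symm hA'P.symm (hB' ▸ h)
  have hne {X : ℝ × ℝ} (hX : X ∈ S) : X ≠ O := fun h => hO (h ▸ hX)
  have hS {X : ℝ × ℝ} (hX : X ∈ S) : X ∈ insert O S := Finset.mem_insert_of_mem hX
  have hOC := Finset.mem_insert_self O S
  exact ⟨hA'B, h.replace_left
    (hτ.not_sepLine_of_mem hAS (hS hBS) hOC (hne hBS) hAB.symm hA'B.symm (hne hAS).symm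
      (hne hA'S).symm)
    (hτ.not_sepLine_of_mem hAS (hS hBS) (hS hP) hBP hAB.symm hA'B.symm hAP.symm hA'P.symm)
    (hC.orient_ne_zero (hS hA'S) (hS hBS) hOC hA'B (hne hA'S) (hne hBS))
    (hC.orient_ne_zero (hS hA'S) (hS hBS) (hS hP) hA'B hA'P hBP)⟩

-- Replacing both points of a line by their twins keeps the line between `O` and `P`; only `τ P`,
-- whose twin `P` is not available, has to stay in place.
theorem even_nsep (hτ : IsTwinPairing S O τ) (hC : Generic (insert O S)) (hO : O ∉ S)
    (hP : P ∈ S) : Even (nsep (insert O S) O P) := by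
  have herase : insert O S \ {O, P} = S.erase P := by
    ext X
    simp only [Finset.mem_sdiff, Finset.mem_insert, Finset.mem_singleton, Finset.mem_erase]
    grind
  change Even (sepPairs (insert O S \ {O, P}) O P).card
  rw [herase]
  refine even_card_of_involution (Finset.image (swapTwinsAwayFrom τ P)) ?_ ?_ ?_
  · intro s hs
    obtain ⟨A, hA, B, hB, hAB, hsep, rfl⟩ := mem_sepPairs.mp hs
    obtain ⟨hσAB, hsep⟩ := hτ.sepLine_swap hC hO hP hA hB hAB hsep
    have hσA := hτ.swap_mem_erase hA
    obtain ⟨hσ, hsep⟩ := hτ.sepLine_swap hC hO hP hB hσA hσAB.symm (sepLine_swap_line.mp hsep)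
    exact mem_sepPairs.mpr ⟨_, hτ.swap_mem_erase hB, _, hσA, hσ, hsep, by
      rw [Finset.image_insert, Finset.image_singleton, Finset.pair_comm]⟩
  · intro s hs
    obtain ⟨A, hA, B, hB, -, -, rfl⟩ := mem_sepPairs.mp hs
    simp only [Finset.image_insert, Finset.image_singleton, hτ.swap_swap hP hA,
      hτ.swap_swap hP hB]
  · intro s hs heq
    obtain ⟨A, hA, B, hB, hAB, hsep, rfl⟩ := mem_sepPairs.mp hs
    have hσA := (hτ.sepLine_swap hC hO hP hA hB hAB hsep).1
    have hσB := (hτ.sepLine_swap hC hO hP hB hA hAB.symm (sepLine_swap_line.mp hsep)).1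
    have hfix {X : ℝ × ℝ} (hX : X ∈ S.erase P) (h : swapTwinsAwayFrom τ P X = X) : X = τ P := by
      by_contra hXP
      exact hτ.ne X (Finset.mem_of_mem_erase hX) (by simpa [swapTwinsAwayFrom, hXP] using h)
    have hmem {X : ℝ × ℝ} (hX : X ∈ ({A, B} : Finset (ℝ × ℝ))) :
        swapTwinsAwayFrom τ P X ∈ ({A, B} : Finset (ℝ × ℝ)) :=
      heq ▸ Finset.mem_image_of_mem _ hX
    have hA' : swapTwinsAwayFrom τ P A = A := by simpa [hσA] using hmem (X := A) (by simp)
    have hB' : swapTwinsAwayFrom τ P B = B := by simpa [hσB] using hmem (X := B) (by simp)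
    exact hAB ((hfix hA hA').trans (hfix hB hB').symm)

end IsTwinPairing

end Twins

section ConvexPosition

variable {S : Finset (ℝ × ℝ)} {A B D X Y : ℝ × ℝ}

lemma sepLine_zero_left : SepLine 0 X A B ↔ det2 X A * det2 X B < 0 := by
  rw [← orient_zero_left, ← orient_zero_left]
  rfl

/-- A set in convex position that surrounds the origin, even after any one of its points has been
removed, and no two points of which are collinear with the origin. -/
structure SurroundsOrigin (S : Finset (ℝ × ℝ)) : Prop where
  convexPos : ConvexPos S
  det2_ne_zero : ∀ A ∈ S, ∀ B ∈ S, A ≠ B → det2 A B ≠ 0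
  zero_mem_convexHull : ∀ A ∈ S, 0 ∈ convexHull ℝ ((S : Set (ℝ × ℝ)) \ {A})

/-- `B` follows `A` in the counterclockwise order in which the points of `S` are seen from the
origin. -/
structure IsNextAround (S : Finset (ℝ × ℝ)) (A B : ℝ × ℝ) : Prop where
  left_mem : A ∈ S
  right_mem : B ∈ S
  det2_pos : 0 < det2 A B
  not_between : ∀ X ∈ S, ¬ (0 < det2 A X ∧ 0 < det2 X B)

lemma ne_of_det2_pos (h : 0 < det2 A B) : A ≠ B := by
  rintro rfl
  simp [det2_self] at h

namespace SurroundsOrigin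

lemma zero_notMem (hS : SurroundsOrigin S) : (0 : ℝ × ℝ) ∉ S :=
  fun h => hS.convexPos 0 h (hS.zero_mem_convexHull 0 h)

-- Otherwise `B` would lie in the triangle with vertices `A`, `D` and `0`.
lemma orient_pos_of_det2_pos (hS : SurroundsOrigin S) (hA : A ∈ S) (hB : B ∈ S) (hD : D ∈ S)
    (hAB : 0 < det2 A B) (hBD : 0 < det2 B D) (hAD : 0 < det2 A D) : 0 < orient A B D := by
  by_contra hneg
  refine hS.convexPos B hB (mem_of_orient_nonneg (convex_convexHull ℝ _) (a := A) (b := D)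
    (subset_convexHull ℝ _ ⟨hA, ne_of_det2_pos hAB⟩)
    (subset_convexHull ℝ _ ⟨hD, (ne_of_det2_pos hBD).symm⟩)
    (hS.zero_mem_convexHull B hB) ?_ ?_ ?_ ?_)
  · rwa [orient_zero_right]
  · rw [orient_zero_right]; exact hBD.le
  · rw [orient_zero_right]; exact hAB.le
  · rw [orient_swap_right]; linarith

lemma orient_pos_of_not_between (hS : SurroundsOrigin S) (hA : A ∈ S) (hB : B ∈ S) (hD : D ∈ S)
    (hDA : D ≠ A) (hDB : D ≠ B) (hAB : 0 < det2 A B) (h : ¬ (0 < det2 A D ∧ 0 < det2 D B)) :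
    0 < orient A B D := by
  rcases (hS.det2_ne_zero D hD A hA hDA).lt_or_gt with hAD | hDA'
  · have hAD : 0 < det2 A D := by rw [det2_swap]; linarith
    have hBD : 0 < det2 B D := by
      rw [det2_swap]
      linarith [lt_of_le_of_ne (not_lt.mp fun h' => h ⟨hAD, h'⟩) (hS.det2_ne_zero D hD B hB hDB)]
    exact hS.orient_pos_of_det2_pos hA hB hD hAB hBD hAD
  · rcases (hS.det2_ne_zero B hB D hD hDB.symm).lt_or_gt with hDB' | hBD
    · rw [← orient_rotate, ← orient_rotate]
      exact hS.orient_pos_of_det2_pos hD hA hB hDA' hAB (by rw [det2_swap]; linarith)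
    · rw [orient_eq_det2_add]
      positivity

lemma orient_ne_zero (hS : SurroundsOrigin S) (hA : A ∈ S) (hB : B ∈ S) (hD : D ∈ S)
    (hAB : A ≠ B) (hDA : D ≠ A) (hDB : D ≠ B) : orient A B D ≠ 0 := by
  wlog hpos : 0 < det2 A B generalizing A B
  · rw [← neg_ne_zero, ← orient_swap]
    refine this hB hA hAB.symm hDB hDA ?_
    rw [det2_swap]
    linarith [lt_of_le_of_ne (not_lt.mp hpos) (hS.det2_ne_zero A hA B hB hAB)]
  by_cases hD' : 0 < det2 A D ∧ 0 < det2 D B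
  · rw [← neg_ne_zero, ← orient_swap_right]
    exact (hS.orient_pos_of_det2_pos hA hD hB hD'.1 hD'.2 hpos).ne'
  · exact (hS.orient_pos_of_not_between hA hB hD hDA hDB hpos hD').ne'

theorem generic (hS : SurroundsOrigin S) : Generic (insert 0 S) := by
  intro a ha b hb c hc hab hac hbc
  rw [collinear_triple_iff_orient_eq_zero]
  rcases Finset.mem_insert.mp ha with rfl | ha
  · rw [orient_zero_left]
    exact hS.det2_ne_zero b (Finset.mem_of_mem_insert_of_ne hb hab.symm)
      c (Finset.mem_of_mem_insert_of_ne hc hac.symm) hbc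
  rcases Finset.mem_insert.mp hb with rfl | hb
  · rw [← orient_rotate, orient_zero_left]
    exact hS.det2_ne_zero c (Finset.mem_of_mem_insert_of_ne hc hbc.symm) a ha hac.symm
  rcases Finset.mem_insert.mp hc with rfl | hc
  · rw [orient_zero_right]
    exact hS.det2_ne_zero a ha b hb hab
  exact hS.orient_ne_zero ha hb hc hab hac.symm hbc.symm

lemma orient_pos_of_isNextAround (hS : SurroundsOrigin S) (h : IsNextAround S A B) (hX : X ∈ S)
    (hXA : X ≠ A) (hXB : X ≠ B) : 0 < orient A B X :=
  hS.orient_pos_of_not_between h.left_mem h.right_mem hX hXA hXB h.det2_pos (h.not_between X hX)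

lemma not_sepLine_zero_of_isNextAround (hS : SurroundsOrigin S) (h : IsNextAround S A B)
    (hX : X ∈ S) (hXA : X ≠ A) (hXB : X ≠ B) : ¬ SepLine A B 0 X := by
  have hpos := mul_pos h.det2_pos (hS.orient_pos_of_isNextAround h hX hXA hXB)
  rw [← orient_zero_right A B] at hpos
  exact hpos.not_gt

-- If `XY` separated `A` from `B`, then `X` would lie in the triangle `ABY` or `Y` in `ABX`.
lemma not_sepLine_of_isNextAround (hS : SurroundsOrigin S) (h : IsNextAround S A B)
    (hX : X ∈ S) (hY : Y ∈ S) (hXY : X ≠ Y) (hXA : X ≠ A) (hXB : X ≠ B) (hYA : Y ≠ A)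
    (hYB : Y ≠ B) : ¬ SepLine X Y A B := by
  intro hsep
  wlog hXYA : 0 < orient X Y A ∧ orient X Y B < 0 generalizing X Y
  · refine this hY hX hXY.symm hYA hYB hXA hXB (sepLine_swap_line.mp hsep) ?_
    rw [orient_swap X Y A, orient_swap X Y B]
    rcases mul_neg_iff.mp hsep with h' | ⟨hXYA', hXYB'⟩
    · exact absurd h' hXYA
    · exact ⟨neg_pos.mpr hXYA', neg_neg_iff_pos.mpr hXYB'⟩
  refine hS.convexPos X hX (mem_of_orient_nonneg (convex_convexHull ℝ _)
    (a := A) (b := B) (c := Y) (subset_convexHull ℝ _ ⟨h.left_mem, hXA.symm⟩)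
    (subset_convexHull ℝ _ ⟨h.right_mem, hXB.symm⟩)
    (subset_convexHull ℝ _ ⟨hY, hXY.symm⟩) (hS.orient_pos_of_isNextAround h hY hYA hYB) ?_ ?_
    (hS.orient_pos_of_isNextAround h hX hXA hXB).le)
  · rw [orient_swap_right]; linarith [hXYA.2]
  · rw [← orient_rotate]; exact hXYA.1.le

theorem nsep_of_isNextAround (hS : SurroundsOrigin S) (h : IsNextAround S A B) :
    nsep (insert 0 S) A B = (S.filter (fun X => det2 X A * det2 X B < 0)).card := by
  have hmem : ∀ X ∈ insert 0 S \ {0, A, B}, X ∈ S ∧ X ≠ A ∧ X ≠ B := by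
    intro X hX
    simp only [Finset.mem_sdiff, Finset.mem_insert, Finset.mem_singleton, not_or] at hX
    exact ⟨hX.1.resolve_left hX.2.1, hX.2.2⟩
  have hpairs : (sepPairs (insert 0 S \ {0, A, B}) A B).card = 0 :=
    card_sepPairs_eq_zero_iff.mpr fun X hX Y hY hXY =>
      hS.not_sepLine_of_isNextAround h (hmem X hX).1 (hmem Y hY).1 hXY (hmem X hX).2.1
        (hmem X hX).2.2 (hmem Y hY).2.1 (hmem Y hY).2.2
  rw [nsep_eq_card_sepPairs_add (Finset.mem_insert_self 0 S)
    (fun h0 => hS.zero_notMem (h0 ▸ h.left_mem))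
    (fun h0 => hS.zero_notMem (h0 ▸ h.right_mem)), hpairs, zero_add]
  simp only [sepLine_zero_left]
  congr 1
  ext X
  simp only [Finset.mem_filter]
  refine ⟨fun hX => ⟨(hmem X hX.1).1, hX.2⟩, fun hX => ⟨?_, hX.2⟩⟩
  have h0 : X ≠ 0 := fun h0 => hS.zero_notMem (h0 ▸ hX.1)
  have hXA : X ≠ A := by rintro rfl; simp [det2_self] at hX
  have hXB : X ≠ B := by rintro rfl; simp [det2_self] at hX
  simp [h0, hXA, hXB, hX.1]

end SurroundsOrigin

end ConvexPosition

section FinArithmetic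

variable {n : ℕ} {i j : Fin n}

lemma fin_val_sub_add_val_sub (hij : i ≠ j) : (j - i).val + (i - j).val = n := by
  have hne : (i : ℕ) ≠ j := fun h => hij (Fin.ext h)
  have h₁ := Fin.intCast_val_sub_eq_sub_add_ite i j
  have h₂ := Fin.intCast_val_sub_eq_sub_add_ite j i
  simp only [Fin.le_def] at h₁ h₂
  split_ifs at h₁ h₂ <;> omega

lemma fin_two_mul_val_sub_lt_or (hodd : Odd n) (hij : i ≠ j) :
    2 * (j - i).val < n ∨ 2 * (i - j).val < n := by
  obtain ⟨m, hm⟩ := hodd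
  have := fin_val_sub_add_val_sub hij
  omega

variable [NeZero n]

lemma fin_val_add_one_sub (hij : i + 1 ≠ j) : (i + 1 - j).val = (i - j).val + 1 := by
  have hne : i - j + 1 ≠ 0 := by
    rwa [← add_sub_right_comm, sub_ne_zero]
  rw [add_sub_right_comm]
  refine Fin.val_add_one_of_lt' (lt_of_le_of_ne (i - j).isLt fun h => hne (Fin.ext ?_))
  simp [Fin.val_add, h]

lemma fin_add_one_ne (hn : 2 ≤ n) : i + 1 ≠ i := by
  have : (1 : Fin n) ≠ 0 := fun h => by simp [Fin.one_eq_zero_iff] at h; omega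
  simpa using this

lemma fin_val_add_one_sub_self (hn : 2 ≤ n) : (i + 1 - i).val = 1 := by
  rw [fin_val_add_one_sub (fin_add_one_ne hn), sub_self, Fin.val_zero]

lemma exists_fin_opposite_edge (hodd : Odd n) (i : Fin n) :
    ∃ k : Fin n, 2 * (i - k).val + 1 = n := by
  obtain ⟨m, hm⟩ := hodd
  exact ⟨i - ⟨m, by omega⟩, by rw [sub_sub_cancel]; exact hm.symm⟩

end FinArithmetic

section Polygon

variable {n : ℕ} {F : Fin n × Bool → ℝ × ℝ} {i j : Fin n} {s t : Bool} {p q : Fin n × Bool}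

/-- A convex `2n`-gon made of `n` pairs `F (i, false)`, `F (i, true)` of consecutive vertices. Seen
from the origin, points of distinct pairs `i` and `j` are ordered like the vertices `i` and `j` of
a regular `n`-gon with `n` odd, and `F (i, true)` comes after `F (i, false)`. -/
structure IsDoubledOddPolygon (F : Fin n × Bool → ℝ × ℝ) : Prop where
  three_le : 3 ≤ n
  odd : Odd n
  det2_pos : ∀ i j, i ≠ j → 2 * (j - i).val < n → ∀ s t, 0 < det2 (F (i, s)) (F (j, t))
  det2_twin_pos : ∀ i, 0 < det2 (F (i, false)) (F (i, true))
  convexPos : ConvexPos (Finset.univ.image F)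

/-- The other member of the pair with the same index. -/
def twin (p : Fin n × Bool) : Fin n × Bool := (p.1, !p.2)

lemma apply_mem_image_univ {α β : Type*} [Fintype α] [DecidableEq β] (f : α → β) (a : α) :
    f a ∈ Finset.univ.image f :=
  Finset.mem_image_of_mem f (Finset.mem_univ a)

namespace IsDoubledOddPolygon

lemma det2_pos_iff (hF : IsDoubledOddPolygon F) (hij : i ≠ j) :
    0 < det2 (F (i, s)) (F (j, t)) ↔ 2 * (j - i).val < n := by
  refine ⟨fun h => ?_, fun h => hF.det2_pos i j hij h s t⟩
  by_contra hlt
  have hji := hF.det2_pos j i hij.symm ((fin_two_mul_val_sub_lt_or hF.odd hij).resolve_left hlt) t s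
  rw [det2_swap] at hji
  linarith

lemma det2_true_nonpos (hF : IsDoubledOddPolygon F) (i : Fin n) (s : Bool) :
    det2 (F (i, true)) (F (i, s)) ≤ 0 := by
  cases s
  · rw [det2_swap]; exact (neg_neg_of_pos (hF.det2_twin_pos i)).le
  · rw [det2_self]

lemma det2_false_nonpos (hF : IsDoubledOddPolygon F) (i : Fin n) (s : Bool) :
    det2 (F (i, s)) (F (i, false)) ≤ 0 := by
  cases s
  · rw [det2_self]
  · exact hF.det2_true_nonpos i false

lemma det2_ne_zero (hF : IsDoubledOddPolygon F) (hpq : p ≠ q) :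
    det2 (F p) (F q) ≠ 0 := by
  obtain ⟨i, s⟩ := p
  obtain ⟨j, t⟩ := q
  by_cases hij : i = j
  · subst hij
    have hpos := hF.det2_twin_pos i
    cases s <;> cases t
    · exact absurd rfl hpq
    · exact hpos.ne'
    · rw [det2_swap]; exact (neg_neg_of_pos hpos).ne
    · exact absurd rfl hpq
  rcases fin_two_mul_val_sub_lt_or hF.odd hij with h | h
  · exact (hF.det2_pos i j hij h s t).ne'
  · rw [det2_swap]
    exact (neg_neg_of_pos (hF.det2_pos j i (Ne.symm hij) h t s)).ne

lemma injective (hF : IsDoubledOddPolygon F) : Function.Injective F := by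
  intro p q hpq
  by_contra hne
  exact hF.det2_ne_zero hne (by rw [hpq, det2_self])

lemma isNextAround_twin (hF : IsDoubledOddPolygon F) (i : Fin n) :
    IsNextAround (Finset.univ.image F) (F (i, false)) (F (i, true)) where
  left_mem := apply_mem_image_univ F _
  right_mem := apply_mem_image_univ F _
  det2_pos := hF.det2_twin_pos i
  not_between := by
    simp only [Finset.mem_image, Finset.mem_univ, true_and]
    rintro _ ⟨⟨j, s⟩, rfl⟩ ⟨h₁, h₂⟩
    by_cases hij : i = j
    · subst hij
      cases s
      · exact ne_of_det2_pos h₁ rfl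
      · exact ne_of_det2_pos h₂ rfl
    · have := fin_val_sub_add_val_sub hij
      have h₁ := (hF.det2_pos_iff hij).mp h₁
      have h₂ := (hF.det2_pos_iff (Ne.symm hij)).mp h₂
      omega

variable [NeZero n]

lemma det2_opposite_edge_pos (hF : IsDoubledOddPolygon F) (h : 2 * (i - j).val + 1 = n)
    (r s t : Bool) : 0 < det2 (F (j, r)) (F (i, s)) ∧ 0 < det2 (F (i + 1, t)) (F (j, r)) := by
  have hn := hF.three_le
  have hij : i ≠ j := by
    rintro rfl
    rw [sub_self, Fin.val_zero] at h
    omega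
  have hij' : i + 1 ≠ j := by
    rintro rfl
    have h₁ := fin_val_sub_add_val_sub hij
    have h₂ : (i + 1 - i).val = 1 := fin_val_add_one_sub_self (by omega)
    omega
  have h₁ := fin_val_add_one_sub hij'
  have h₂ := fin_val_sub_add_val_sub hij'
  exact ⟨hF.det2_pos j i hij.symm (by omega) r s, hF.det2_pos (i + 1) j hij' (by omega) t r⟩

lemma det2_add_one_pos (hF : IsDoubledOddPolygon F) (i : Fin n) (s t : Bool) :
    0 < det2 (F (i, s)) (F (i + 1, t)) := by
  have hn := hF.three_le
  refine hF.det2_pos i (i + 1) (fin_add_one_ne (by omega)).symm ?_ s t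
  rw [fin_val_add_one_sub_self (by omega)]
  omega

-- The triangle on an edge starting at the twin of the removed point and a point opposite to it.
lemma zero_mem_convexHull (hF : IsDoubledOddPolygon F) (p : Fin n × Bool) :
    0 ∈ convexHull ℝ ((Finset.univ.image F : Set (ℝ × ℝ)) \ {F p}) := by
  obtain ⟨i, s⟩ := p
  obtain ⟨j, hj⟩ := exists_fin_opposite_edge hF.odd i
  have hmem (q : Fin n × Bool) (hq : F q ≠ F (i, s)) :
      F q ∈ convexHull ℝ ((Finset.univ.image F : Set (ℝ × ℝ)) \ {F (i, s)}) :=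
    subset_convexHull ℝ _ ⟨apply_mem_image_univ F q, hq⟩
  have hedge := hF.det2_add_one_pos i (!s) false
  obtain ⟨hji, hij⟩ := hF.det2_opposite_edge_pos hj false (!s) false
  refine mem_of_orient_nonneg (convex_convexHull ℝ _) (hmem (i, !s) (hF.injective.ne (by simp)))
    (hmem (i + 1, false) (ne_of_det2_pos (hF.det2_add_one_pos i s false)).symm)
    (hmem (j, false) (ne_of_det2_pos (hF.det2_opposite_edge_pos hj false s false).1)) ?_ ?_ ?_ ?_
  · rw [orient_eq_det2_add]; positivity
  · rw [orient_zero_left]; exact hij.le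
  · rw [← orient_rotate, orient_zero_left]; exact hji.le
  · rw [orient_zero_right]; exact hedge.le

lemma surroundsOrigin (hF : IsDoubledOddPolygon F) :
    SurroundsOrigin (Finset.univ.image F) where
  convexPos := hF.convexPos
  det2_ne_zero := by
    simp only [Finset.mem_image, Finset.mem_univ, true_and]
    rintro _ ⟨p, rfl⟩ _ ⟨q, rfl⟩ hpq
    exact hF.det2_ne_zero fun h => hpq (congrArg F h)
  zero_mem_convexHull := by
    simp only [Finset.mem_image, Finset.mem_univ, true_and]
    rintro _ ⟨p, rfl⟩
    exact hF.zero_mem_convexHull p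

lemma isNextAround_add_one (hF : IsDoubledOddPolygon F) (i : Fin n) :
    IsNextAround (Finset.univ.image F) (F (i, true)) (F (i + 1, false)) where
  left_mem := apply_mem_image_univ F _
  right_mem := apply_mem_image_univ F _
  det2_pos := hF.det2_add_one_pos i true false
  not_between := by
    simp only [Finset.mem_image, Finset.mem_univ, true_and]
    rintro _ ⟨⟨j, s⟩, rfl⟩ ⟨h₁, h₂⟩
    by_cases hij : i = j
    · subst hij
      exact (hF.det2_true_nonpos i s).not_gt h₁
    by_cases hij' : i + 1 = j
    · subst hij'
      exact (hF.det2_false_nonpos (i + 1) s).not_gt h₂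
    have hsum := fin_val_sub_add_val_sub hij
    have hsucc := fin_val_add_one_sub hij'
    have h₁ := (hF.det2_pos_iff hij).mp h₁
    have h₂ := (hF.det2_pos_iff (Ne.symm hij')).mp h₂
    omega

theorem nsep_twin (hF : IsDoubledOddPolygon F) (i : Fin n) :
    nsep (insert 0 (Finset.univ.image F)) (F (i, false)) (F (i, true)) = 0 := by
  rw [hF.surroundsOrigin.nsep_of_isNextAround (hF.isNextAround_twin i), Finset.card_eq_zero,
    Finset.filter_eq_empty_iff]
  simp only [Finset.mem_image, Finset.mem_univ, true_and]
  rintro _ ⟨⟨j, s⟩, rfl⟩ hneg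
  by_cases hij : i = j
  · subst hij
    cases s <;> simp [det2_self] at hneg
  · rcases mul_neg_iff.mp hneg with ⟨h₁, h₂⟩ | ⟨h₁, h₂⟩
    · exact h₂.not_gt ((hF.det2_pos_iff (Ne.symm hij)).mpr ((hF.det2_pos_iff (Ne.symm hij)).mp h₁))
    · exact h₁.not_gt ((hF.det2_pos_iff (Ne.symm hij)).mpr ((hF.det2_pos_iff (Ne.symm hij)).mp h₂))

lemma det2_mul_det2_add_one_neg_iff (hF : IsDoubledOddPolygon F) (s : Bool) :
    det2 (F (j, s)) (F (i, true)) * det2 (F (j, s)) (F (i + 1, false)) < 0 ↔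
      2 * (i - j).val + 1 = n := by
  constructor
  · intro hneg
    have hij : i ≠ j := by
      rintro rfl
      refine hneg.not_ge (mul_nonneg ?_ (hF.det2_add_one_pos i s false).le)
      rw [det2_swap]
      linarith [hF.det2_true_nonpos i s]
    have hij' : i + 1 ≠ j := by
      rintro rfl
      refine hneg.not_ge (mul_nonneg_of_nonpos_of_nonpos ?_ (hF.det2_false_nonpos (i + 1) s))
      rw [det2_swap]
      linarith [hF.det2_add_one_pos i true s]
    have hsucc := fin_val_add_one_sub hij'
    rcases mul_neg_iff.mp hneg with ⟨h₁, h₂⟩ | ⟨h₁, h₂⟩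
    · have h₁ := (hF.det2_pos_iff hij.symm).mp h₁
      have h₂ := mt (hF.det2_pos_iff (t := false) hij'.symm).mpr h₂.not_gt
      have hodd := Nat.odd_iff.mp hF.odd
      omega
    · have h₁ := mt (hF.det2_pos_iff (t := true) hij.symm).mpr h₁.not_gt
      have h₂ := (hF.det2_pos_iff hij'.symm).mp h₂
      omega
  · intro h
    obtain ⟨h₁, h₂⟩ := hF.det2_opposite_edge_pos h s true false
    rw [det2_swap (F (i + 1, false)) (F (j, s)), mul_neg, neg_lt_zero]
    exact mul_pos h₁ h₂

theorem nsep_add_one (hF : IsDoubledOddPolygon F) (i : Fin n) :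
    nsep (insert 0 (Finset.univ.image F)) (F (i, true)) (F (i + 1, false)) = 2 := by
  rw [hF.surroundsOrigin.nsep_of_isNextAround (hF.isNextAround_add_one i)]
  obtain ⟨k, hk⟩ := exists_fin_opposite_edge hF.odd i
  have hiff (j : Fin n) : 2 * (i - j).val + 1 = n ↔ j = k := by
    refine ⟨fun h => sub_right_injective (Fin.ext ?_ : i - j = i - k), fun h => h ▸ hk⟩
    omega
  rw [Finset.filter_image, Finset.card_image_of_injective _ hF.injective]
  have hfilter : Finset.univ.filter (fun p : Fin n × Bool =>
      det2 (F p) (F (i, true)) * det2 (F p) (F (i + 1, false)) < 0) = {k} ×ˢ Finset.univ := by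
    ext ⟨j, s⟩
    simp only [Finset.mem_filter, Finset.mem_univ, true_and, hF.det2_mul_det2_add_one_neg_iff, hiff,
      Finset.mem_product, Finset.mem_singleton, and_true]
  rw [hfilter, Finset.card_product, Finset.card_singleton, Finset.card_univ, Fintype.card_bool]

lemma isTwinPairing (hF : IsDoubledOddPolygon F) :
    IsTwinPairing (Finset.univ.image F) 0 (Function.extend F (F ∘ twin) id) := by
  have hτ (p : Fin n × Bool) : Function.extend F (F ∘ twin) id (F p) = F (twin p) :=
    hF.injective.extend_apply _ _ p
  have hne (p : Fin n × Bool) : twin p ≠ p := fun h => by simpa [twin] using congrArg Prod.snd h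
  have hinv (p : Fin n × Bool) : twin (twin p) = p := by simp [twin]
  constructor <;> simp only [Finset.mem_image, Finset.mem_univ, true_and] <;> rintro _ ⟨p, rfl⟩
  · exact ⟨twin p, (hτ p).symm⟩
  · rw [hτ, hτ, hinv]
  · rw [hτ]
    exact fun h => hne p (hF.injective h)
  · rw [hτ]
    obtain ⟨i, _ | _⟩ := p
    · exact hF.nsep_twin i
    · rw [nsep_comm]
      exact hF.nsep_twin i
  · rintro _ ⟨q, rfl⟩ hqp hqp'
    rw [hτ] at hqp' ⊢
    obtain ⟨i, _ | _⟩ := p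
    · exact hF.surroundsOrigin.not_sepLine_zero_of_isNextAround (hF.isNextAround_twin i)
        (apply_mem_image_univ F q) hqp hqp'
    · rw [sepLine_swap_line]
      exact hF.surroundsOrigin.not_sepLine_zero_of_isNextAround (hF.isNextAround_twin i)
        (apply_mem_image_univ F q) hqp' hqp

theorem even_nsep_zero (hF : IsDoubledOddPolygon F)
    (p : Fin n × Bool) : Even (nsep (insert 0 (Finset.univ.image F)) 0 (F p)) :=
  have hS := hF.surroundsOrigin
  hF.isTwinPairing.even_nsep hS.generic hS.zero_notMem (apply_mem_image_univ F p)

lemma card_insert_zero (hF : IsDoubledOddPolygon F) :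
    (insert 0 (Finset.univ.image F)).card = 2 * n + 1 := by
  rw [Finset.card_insert_of_notMem hF.surroundsOrigin.zero_notMem,
    Finset.card_image_of_injective _ hF.injective, Finset.card_univ, Fintype.card_prod,
    Fintype.card_fin, Fintype.card_bool, mul_comm]

theorem mono (hF : IsDoubledOddPolygon F) :
    Mono (insert 0 (Finset.univ.image F)) := by
  refine hF.surroundsOrigin.generic.mono_of_forall_orchard
    (Finset.mem_insert_self 0 _) fun P hP hP0 => ?_
  obtain ⟨p, -, rfl⟩ := Finset.mem_image.mp (Finset.mem_of_mem_insert_of_ne hP hP0)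
  exact (orchard_iff_even_of_odd_card ⟨n, hF.card_insert_zero⟩).mpr
    (hF.even_nsep_zero p)

end IsDoubledOddPolygon

end Polygon

section Perturbation

variable {n : ℕ} {P P' : Fin n → ℝ × ℝ}

lemma det2_vtx (i j : Fin n) :
    det2 (vtx n i) (vtx n j) = Real.sin (2 * Real.pi * (j - i).val / n) := by
  have hn : (n : ℝ) ≠ 0 := Nat.cast_ne_zero.mpr i.pos.ne'
  have hsin : det2 (vtx n i) (vtx n j) = Real.sin (2 * Real.pi * ((j : ℝ) - i) / n) := by
    rw [mul_sub, sub_div, Real.sin_sub, det2, vtx, vtx]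
    ring
  have hval : ((j - i).val : ℝ) = (j : ℝ) - i + if i ≤ j then 0 else (n : ℝ) :=
    mod_cast congrArg (Int.cast : ℤ → ℝ) (Fin.intCast_val_sub_eq_sub_add_ite j i)
  rw [hsin, hval]
  split_ifs
  · rw [add_zero]
  · rw [← Real.sin_add_two_pi]
    congr 1
    field_simp

lemma det2_vtx_pos {i j : Fin n} (hij : i ≠ j) (h : 2 * (j - i).val < n) :
    0 < det2 (vtx n i) (vtx n j) := by
  have hn : (0 : ℝ) < n := Nat.cast_pos.mpr i.pos
  have hpos : (0 : ℝ) < (j - i).val := by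
    have := fin_val_sub_add_val_sub hij
    have := (i - j).isLt
    exact Nat.cast_pos.mpr (by omega)
  have hlt : 2 * ((j - i).val : ℝ) < n := mod_cast h
  rw [det2_vtx]
  refine Real.sin_pos_of_pos_of_lt_pi (by positivity) ?_
  rw [div_lt_iff₀ hn]
  nlinarith [Real.pi_pos]

open Filter Topology in
lemma exists_radius_forall_det2_pos {ι : Type*} [Finite ι] (v : ι → ℝ × ℝ) :
    ∃ ε > 0, ∀ F : ι → ℝ × ℝ, (∀ a, dist (F a) (v a) < ε) →
      ∀ a b, 0 < det2 (v a) (v b) → 0 < det2 (F a) (F b) := by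
  have := Fintype.ofFinite ι
  have h : ∀ᶠ F in 𝓝 v, ∀ a b, 0 < det2 (v a) (v b) → 0 < det2 (F a) (F b) := by
    simp only [eventually_all]
    intro a b hab
    have hcont : Continuous fun F : ι → ℝ × ℝ => det2 (F a) (F b) := by
      unfold det2
      fun_prop
    exact hcont.continuousAt.eventually_const_lt hab
  obtain ⟨ε, hε, hball⟩ := Metric.eventually_nhds_iff.mp h
  exact ⟨ε, hε, fun F hF => hball ((dist_pi_lt_iff hε).mpr hF)⟩

/-- The points `P i` and `P' i` as one family, with `P i` labelled `(i, false)` and `P' i` labelled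
`(i, true)`. -/
def doubled (P P' : Fin n → ℝ × ℝ) (p : Fin n × Bool) : ℝ × ℝ :=
  bif p.2 then P' p.1 else P p.1

lemma image_doubled : Finset.univ.image (doubled P P') =
    Finset.image P Finset.univ ∪ Finset.image P' Finset.univ := by
  ext x
  simp only [Finset.mem_image, Finset.mem_univ, true_and, Finset.mem_union, Prod.exists,
    Bool.exists_bool, doubled, cond_false, cond_true, exists_or]

lemma exists_radius_isDoubledOddPolygon (hn : 3 ≤ n) (hodd : Odd n) :
    ∃ ε > 0, ∀ P P' : Fin n → ℝ × ℝ,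
      (∀ i, dist (P i) (vtx n i) < ε ∧ dist (P' i) (vtx n i) < ε) →
      ConvexPos (Finset.image P Finset.univ ∪ Finset.image P' Finset.univ) →
      (∀ i, 0 < det2 (P' i - P i) (0 - P i)) → IsDoubledOddPolygon (doubled P P') := by
  obtain ⟨ε, hε, hdet⟩ := exists_radius_forall_det2_pos fun p : Fin n × Bool => vtx n p.1
  refine ⟨ε, hε, fun P P' hnear hconv hside => ⟨hn, hodd, fun i j hij h s t => ?_, fun i => ?_, ?_⟩⟩
  · refine hdet _ ?_ (i, s) (j, t) (det2_vtx_pos hij h)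
    rintro ⟨k, _ | _⟩
    exacts [(hnear k).1, (hnear k).2]
  · change 0 < det2 (P i) (P' i)
    exact orient_zero_right (P i) (P' i) ▸ hside i
  · rwa [image_doubled]

end Perturbation

/-- The points `P i` and `P' i` together with the origin. -/
def doubledWithCenter {n : ℕ} (P P' : Fin n → ℝ × ℝ) : Finset (ℝ × ℝ) :=
  insert 0 (Finset.image P Finset.univ ∪ Finset.image P' Finset.univ)

theorem doubled_ngon_with_center_mono_general (n : ℕ) [NeZero n] (hn : 3 ≤ n) (hodd : Odd n) :
    ∃ ε > (0 : ℝ), ∀ P P' : Fin n → ℝ × ℝ,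
      (∀ i, dist (P i) (vtx n i) < ε ∧ dist (P' i) (vtx n i) < ε) →
      ConvexPos (Finset.image P Finset.univ ∪ Finset.image P' Finset.univ) →
      (∀ i, 0 < det2 (P' i - P i) (0 - P i)) →
      Generic (doubledWithCenter P P') ∧ Mono (doubledWithCenter P P') ∧
        ∀ i, nsep (doubledWithCenter P P') (P i) (P' i) = 0 ∧
          nsep (doubledWithCenter P P') (P' i) (P (i + 1)) = 2 ∧
          Even (nsep (doubledWithCenter P P') 0 (P i)) := by
  obtain ⟨ε, hε, hpolygon⟩ := exists_radius_isDoubledOddPolygon hn hodd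
  refine ⟨ε, hε, fun P P' hnear hconv hside => ?_⟩
  have hF := hpolygon P P' hnear hconv hside
  rw [doubledWithCenter, ← image_doubled]
  exact ⟨hF.surroundsOrigin.generic, hF.mono,
    fun i => ⟨hF.nsep_twin i, hF.nsep_add_one i, hF.even_nsep_zero (i, false)⟩⟩

/-- For odd `n ≥ 3`, the `2n+1`-point configuration obtained from a regular
`n`-gon by replacing each vertex by a pair of infinitesimally-close points
(with the `2n` outer points in convex position, labeled consistently with the
counterclockwise cyclic order) and adding the barycenter is monochromatic.
In particular `n(P_i,P'_i) = 0`, `n(P'_i,P_{i+1}) = 2` and `n(C,P_i)` is even. -/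
theorem doubled_ngon_with_center_mono (n : ℕ) [NeZero n] (hn : 3 ≤ n) (hodd : Odd n) :
    ∃ ε > (0 : ℝ), ∀ P P' : Fin n → ℝ × ℝ,
      (∀ i : Fin n, dist (P i) (vtx n i) < ε ∧ dist (P' i) (vtx n i) < ε) →
      ConvexPos (Finset.image P Finset.univ ∪ Finset.image P' Finset.univ) →
      (∀ i : Fin n, 0 < det2 (P' i - P i) ((0, 0) - P i)) →
      Generic (insert ((0, 0) : ℝ × ℝ)
        (Finset.image P Finset.univ ∪ Finset.image P' Finset.univ)) →
      (∀ i : Fin n,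
        nsep (insert ((0, 0) : ℝ × ℝ)
          (Finset.image P Finset.univ ∪ Finset.image P' Finset.univ)) (P i) (P' i) = 0) →
      Mono (insert ((0, 0) : ℝ × ℝ)
          (Finset.image P Finset.univ ∪ Finset.image P' Finset.univ)) ∧
        ∀ i : Fin n,
          nsep (insert ((0, 0) : ℝ × ℝ)
            (Finset.image P Finset.univ ∪ Finset.image P' Finset.univ))
            (P i) (P' i) = 0 ∧
          nsep (insert ((0, 0) : ℝ × ℝ)
            (Finset.image P Finset.univ ∪ Finset.image P' Finset.univ))
            (P' i) (P (i + 1)) = 2 ∧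
          Even (nsep (insert ((0, 0) : ℝ × ℝ)
            (Finset.image P Finset.univ ∪ Finset.image P' Finset.univ))
            ((0, 0)) (P i)) := by
  obtain ⟨ε, hε, h⟩ := doubled_ngon_with_center_mono_general n hn hodd
  exact ⟨ε, hε, fun P P' hnear hconv hside _ _ => (h P P' hnear hconv hside).2⟩
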